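/- The family of monomials x^k y^l θ^m, indexed by k ∈ ℕ and l, m ∈ {0,1,2}, forms a basis of O(R_q(2|1)) as a ℂ-vector space. -/

import Mathlib

/-!
`O(ℝ_q(2|1))`: the unital associative ℂ-algebra with generators `x`, `y`, `θ`,
defined as the quotient of the free algebra `ℂ⟨x,y,θ⟩` by the two-sided ideal
generated by `xy − q·yx`, `xθ − q·θx`, `yθ − q²·θy`, `y³`, `θ³`.
-/

noncomputable section

inductive Gen : Type
  | x | y | th

abbrev FA : Type := FreeAlgebra ℂ Gen

def Xf : FA := FreeAlgebra.ι ℂ Gen.x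
def Yf : FA := FreeAlgebra.ι ℂ Gen.y
def Tf : FA := FreeAlgebra.ι ℂ Gen.th

/-- The defining relations of `O(ℝ_q(2|1))`. -/
inductive QRel (q : ℂ) : FA → FA → Prop
  | xy : QRel q (Xf * Yf) (q • (Yf * Xf))
  | xth : QRel q (Xf * Tf) (q • (Tf * Xf))
  | yth : QRel q (Yf * Tf) ((q ^ 2) • (Tf * Yf))
  | ycube : QRel q (Yf ^ 3) 0
  | thcube : QRel q (Tf ^ 3) 0

/-- The algebra of functions on the Z₃-graded quantum superspace `ℝ_q(2|1)`. -/
abbrev Osp (q : ℂ) : Type := RingQuot (QRel q)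

def Xg (q : ℂ) : Osp q := RingQuot.mkAlgHom ℂ (QRel q) Xf
def Yg (q : ℂ) : Osp q := RingQuot.mkAlgHom ℂ (QRel q) Yf
def Tg (q : ℂ) : Osp q := RingQuot.mkAlgHom ℂ (QRel q) Tf

/-- The space with basis `e (k, l, m)`, on which the algebra acts; `e (k, l, m)` plays the role of
`x ^ k * y ^ l * θ ^ m`. -/
abbrev MonomialSpace : Type := ℕ × ℕ × ℕ →₀ ℂ

/-- Left multiplication by `x` on monomials. -/
def xOp : Module.End ℂ MonomialSpace :=
  Finsupp.linearCombination ℂ fun p => Finsupp.single (p.1 + 1, p.2.1, p.2.2) 1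

/-- Left multiplication by `y` on monomials. -/
def yOp (q : ℂ) : Module.End ℂ MonomialSpace :=
  Finsupp.linearCombination ℂ fun p =>
    if p.2.1 < 2 then Finsupp.single (p.1, p.2.1 + 1, p.2.2) (q ^ (2 * p.1)) else 0

/-- Left multiplication by `θ` on monomials. -/
def thOp (q : ℂ) : Module.End ℂ MonomialSpace :=
  Finsupp.linearCombination ℂ fun p =>
    if p.2.2 < 2 then Finsupp.single (p.1, p.2.1, p.2.2 + 1) (q ^ (2 * p.1 + p.2.1)) else 0

lemma xOp_single (k l m : ℕ) (c : ℂ) :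
    xOp (Finsupp.single (k, l, m) c) = Finsupp.single (k + 1, l, m) c := by
  simp [xOp]

lemma yOp_single (q : ℂ) (k l m : ℕ) (c : ℂ) :
    yOp q (Finsupp.single (k, l, m) c) =
      if l < 2 then Finsupp.single (k, l + 1, m) (c * q ^ (2 * k)) else 0 := by
  simp [yOp]

lemma thOp_single (q : ℂ) (k l m : ℕ) (c : ℂ) :
    thOp q (Finsupp.single (k, l, m) c) =
      if m < 2 then Finsupp.single (k, l, m + 1) (c * q ^ (2 * k + l)) else 0 := by
  simp [thOp]

/-- The operators assigned to the generators. -/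
def genOp (q : ℂ) : Gen → Module.End ℂ MonomialSpace
  | .x => xOp
  | .y => yOp q
  | .th => thOp q

lemma lift_genOp_eq_of_rel {q : ℂ} (hq3 : q ^ 3 = 1) {a b : FA} (h : QRel q a b) :
    FreeAlgebra.lift ℂ (genOp q) a = FreeAlgebra.lift ℂ (genOp q) b := by
  cases h <;>
    simp only [Xf, Yf, Tf, map_mul, map_smul, map_zero, FreeAlgebra.lift_ι_apply, genOp,
      pow_three] <;>
    refine Finsupp.lhom_ext fun ⟨k, l, m⟩ c => ?_ <;>
    simp only [Module.End.mul_apply, LinearMap.smul_apply, xOp_single, yOp_single, thOp_single,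
      LinearMap.zero_apply]
  · split_ifs
    · rw [xOp_single, Finsupp.smul_single, smul_eq_mul]
      congr 1
      linear_combination (-c * q ^ (2 * k)) * hq3
    · simp
  · split_ifs
    · rw [xOp_single, Finsupp.smul_single, smul_eq_mul]
      congr 1
      linear_combination (-c * q ^ (2 * k + l)) * hq3
    · simp
  · by_cases hl : l < 2 <;> by_cases hm : m < 2 <;>
      simp only [hl, hm, if_true, if_false, map_zero, smul_zero, yOp_single, thOp_single]
    rw [Finsupp.smul_single, smul_eq_mul]
    congr 1
    linear_combination (-c * q ^ (4 * k + l)) * hq3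
  · by_cases h0 : l < 2 <;> by_cases h1 : l + 1 < 2 <;>
      simp only [h0, h1, if_true, if_false, map_zero, yOp_single]
    rw [if_neg (by omega)]
  · by_cases h0 : m < 2 <;> by_cases h1 : m + 1 < 2 <;>
      simp only [h0, h1, if_true, if_false, map_zero, thOp_single]
    rw [if_neg (by omega)]

/-- The action of `Osp q` on the space of monomials. -/
def monomialRep {q : ℂ} (hq3 : q ^ 3 = 1) : Osp q →ₐ[ℂ] Module.End ℂ MonomialSpace :=
  RingQuot.liftAlgHom ℂ ⟨FreeAlgebra.lift ℂ (genOp q), fun _ _ h => lift_genOp_eq_of_rel hq3 h⟩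

lemma monomialRep_Xg {q : ℂ} (hq3 : q ^ 3 = 1) : monomialRep hq3 (Xg q) = xOp := by
  simp [monomialRep, Xg, Xf, genOp]

lemma monomialRep_Yg {q : ℂ} (hq3 : q ^ 3 = 1) : monomialRep hq3 (Yg q) = yOp q := by
  simp [monomialRep, Yg, Yf, genOp]

lemma monomialRep_Tg {q : ℂ} (hq3 : q ^ 3 = 1) : monomialRep hq3 (Tg q) = thOp q := by
  simp [monomialRep, Tg, Tf, genOp]

lemma xOp_pow_single (n k l m : ℕ) (c : ℂ) :
    (xOp ^ n) (Finsupp.single (k, l, m) c) = Finsupp.single (k + n, l, m) c := by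
  induction n with
  | zero => simp
  | succ n ih => rw [pow_succ', Module.End.mul_apply, ih, xOp_single, add_assoc]

lemma yOp_pow_single (q : ℂ) {l : ℕ} (hl : l < 3) (m : ℕ) :
    (yOp q ^ l) (Finsupp.single (0, 0, m) 1) = Finsupp.single (0, l, m) 1 := by
  induction l with
  | zero => simp
  | succ l ih =>
    rw [pow_succ', Module.End.mul_apply, ih (by omega), yOp_single, if_pos (by omega)]
    simp

lemma thOp_pow_single (q : ℂ) {m : ℕ} (hm : m < 3) :
    (thOp q ^ m) (Finsupp.single (0, 0, 0) 1) = Finsupp.single (0, 0, m) 1 := by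
  induction m with
  | zero => simp
  | succ m ih =>
    rw [pow_succ', Module.End.mul_apply, ih (by omega), thOp_single, if_pos (by omega)]
    simp

lemma monomialRep_monomial {q : ℂ} (hq3 : q ^ 3 = 1) (k : ℕ) {l m : ℕ} (hl : l < 3) (hm : m < 3) :
    monomialRep hq3 (Xg q ^ k * Yg q ^ l * Tg q ^ m) (Finsupp.single (0, 0, 0) 1) =
      Finsupp.single (k, l, m) 1 := by
  simp only [map_mul, map_pow, monomialRep_Xg, monomialRep_Yg, monomialRep_Tg,
    Module.End.mul_apply]
  rw [thOp_pow_single q hm, yOp_pow_single q hl, xOp_pow_single, zero_add]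

lemma Xg_mul_Yg (q : ℂ) : Xg q * Yg q = q • (Yg q * Xg q) := by
  simpa [Xg, Yg] using RingQuot.mkAlgHom_rel ℂ (QRel.xy (q := q))

lemma Xg_mul_Tg (q : ℂ) : Xg q * Tg q = q • (Tg q * Xg q) := by
  simpa [Xg, Tg] using RingQuot.mkAlgHom_rel ℂ (QRel.xth (q := q))

lemma Yg_mul_Tg (q : ℂ) : Yg q * Tg q = q ^ 2 • (Tg q * Yg q) := by
  simpa [Yg, Tg] using RingQuot.mkAlgHom_rel ℂ (QRel.yth (q := q))

lemma Yg_pow_three (q : ℂ) : Yg q ^ 3 = 0 := by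
  simpa [Yg] using RingQuot.mkAlgHom_rel ℂ (QRel.ycube (q := q))

lemma Tg_pow_three (q : ℂ) : Tg q ^ 3 = 0 := by
  simpa [Tg] using RingQuot.mkAlgHom_rel ℂ (QRel.thcube (q := q))

/-- If `b` commutes with `a` up to a scalar, it commutes with powers of `a` up to a scalar. -/
lemma mul_pow_eq_smul_of_mul_eq_smul {R A : Type*} [CommSemiring R] [Semiring A] [Algebra R A]
    {a b : A} {c : R} (h : b * a = c • (a * b)) (n : ℕ) : b * a ^ n = c ^ n • (a ^ n * b) := by
  induction n with
  | zero => simp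
  | succ n ih =>
    rw [pow_succ, ← mul_assoc, ih, smul_mul_assoc, mul_assoc, h, mul_smul_comm, smul_smul,
      ← pow_succ, mul_assoc]

lemma Yg_mul_Xg {q : ℂ} (hq3 : q ^ 3 = 1) : Yg q * Xg q = q ^ 2 • (Xg q * Yg q) := by
  rw [Xg_mul_Yg, smul_smul, ← pow_succ, hq3, one_smul]

lemma Tg_mul_Xg {q : ℂ} (hq3 : q ^ 3 = 1) : Tg q * Xg q = q ^ 2 • (Xg q * Tg q) := by
  rw [Xg_mul_Tg, smul_smul, ← pow_succ, hq3, one_smul]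

lemma Tg_mul_Yg {q : ℂ} (hq3 : q ^ 3 = 1) : Tg q * Yg q = q • (Yg q * Tg q) := by
  rw [Yg_mul_Tg, smul_smul, ← pow_succ', hq3, one_smul]

/-- The span of the monomials `x ^ k * y ^ l * θ ^ m` with `l, m < 3`. -/
def monomialSpan (q : ℂ) : Submodule ℂ (Osp q) :=
  Submodule.span ℂ (Set.range (fun p : ℕ × Fin 3 × Fin 3 =>
      (Xg q) ^ p.1 * (Yg q) ^ (p.2.1 : ℕ) * (Tg q) ^ (p.2.2 : ℕ)))

lemma monomial_mem_monomialSpan (q : ℂ) (k l m : ℕ) :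
    Xg q ^ k * Yg q ^ l * Tg q ^ m ∈ monomialSpan q := by
  by_cases hl : l < 3
  · by_cases hm : m < 3
    · exact Submodule.subset_span ⟨(k, ⟨l, hl⟩, ⟨m, hm⟩), rfl⟩
    · rw [pow_eq_zero_of_le (not_lt.mp hm) (Tg_pow_three q), mul_zero]
      exact zero_mem _
  · rw [pow_eq_zero_of_le (not_lt.mp hl) (Yg_pow_three q), mul_zero, zero_mul]
    exact zero_mem _

lemma mul_mem_monomialSpan_of_monomial {q : ℂ} {a : Osp q}
    (h : ∀ k l m : ℕ, a * (Xg q ^ k * Yg q ^ l * Tg q ^ m) ∈ monomialSpan q)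
    {s : Osp q} (hs : s ∈ monomialSpan q) : a * s ∈ monomialSpan q := by
  induction hs using Submodule.span_induction with
  | mem s hs =>
    obtain ⟨p, rfl⟩ := hs
    exact h _ _ _
  | zero => simp
  | add s t _ _ hs ht => rw [mul_add]; exact add_mem hs ht
  | smul c s _ hs => rw [mul_smul_comm]; exact Submodule.smul_mem _ c hs

lemma Xg_mul_monomial (q : ℂ) (k l m : ℕ) :
    Xg q * (Xg q ^ k * Yg q ^ l * Tg q ^ m) = Xg q ^ (k + 1) * Yg q ^ l * Tg q ^ m := by
  rw [pow_succ']
  simp only [mul_assoc]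

lemma Yg_mul_monomial {q : ℂ} (hq3 : q ^ 3 = 1) (k l m : ℕ) :
    Yg q * (Xg q ^ k * Yg q ^ l * Tg q ^ m) =
      (q ^ 2) ^ k • (Xg q ^ k * Yg q ^ (l + 1) * Tg q ^ m) := by
  rw [← mul_assoc, ← mul_assoc, mul_pow_eq_smul_of_mul_eq_smul (Yg_mul_Xg hq3), pow_succ' (Yg q)]
  simp only [mul_assoc, smul_mul_assoc]

lemma Tg_mul_monomial {q : ℂ} (hq3 : q ^ 3 = 1) (k l m : ℕ) :
    Tg q * (Xg q ^ k * Yg q ^ l * Tg q ^ m) =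
      ((q ^ 2) ^ k * q ^ l) • (Xg q ^ k * Yg q ^ l * Tg q ^ (m + 1)) := by
  rw [← mul_assoc, ← mul_assoc, mul_pow_eq_smul_of_mul_eq_smul (Tg_mul_Xg hq3), smul_mul_assoc,
    mul_assoc (Xg q ^ k), mul_pow_eq_smul_of_mul_eq_smul (Tg_mul_Yg hq3), pow_succ' (Tg q)]
  simp only [mul_assoc, smul_mul_assoc, mul_smul_comm, smul_smul]

lemma mul_mem_monomialSpan {q : ℂ} (hq3 : q ^ 3 = 1) (a : FA) {s : Osp q}
    (hs : s ∈ monomialSpan q) : RingQuot.mkAlgHom ℂ (QRel q) a * s ∈ monomialSpan q := by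
  induction a using FreeAlgebra.induction generalizing s with
  | grade0 c =>
    rw [AlgHom.commutes, ← Algebra.smul_def]
    exact Submodule.smul_mem _ c hs
  | grade1 g =>
    refine mul_mem_monomialSpan_of_monomial (fun k l m => ?_) hs
    cases g
    · change Xg q * _ ∈ _
      rw [Xg_mul_monomial]
      exact monomial_mem_monomialSpan q _ _ _
    · change Yg q * _ ∈ _
      rw [Yg_mul_monomial hq3]
      exact Submodule.smul_mem _ _ (monomial_mem_monomialSpan q _ _ _)
    · change Tg q * _ ∈ _
      rw [Tg_mul_monomial hq3]
      exact Submodule.smul_mem _ _ (monomial_mem_monomialSpan q _ _ _)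
  | mul a b ha hb =>
    rw [map_mul, mul_assoc]
    exact ha (hb hs)
  | add a b ha hb =>
    rw [map_add, add_mul]
    exact add_mem (ha hs) (hb hs)

lemma monomialSpan_eq_top {q : ℂ} (hq3 : q ^ 3 = 1) : monomialSpan q = ⊤ := by
  refine eq_top_iff.mpr fun z _ => ?_
  obtain ⟨a, rfl⟩ := RingQuot.mkAlgHom_surjective ℂ (QRel q) z
  have h1 : (1 : Osp q) ∈ monomialSpan q := by
    simpa using monomial_mem_monomialSpan q 0 0 0
  simpa using mul_mem_monomialSpan hq3 a h1

lemma linearIndependent_monomials {q : ℂ} (hq3 : q ^ 3 = 1) :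
    LinearIndependent ℂ (fun p : ℕ × Fin 3 × Fin 3 =>
      (Xg q) ^ p.1 * (Yg q) ^ (p.2.1 : ℕ) * (Tg q) ^ (p.2.2 : ℕ)) := by
  refine LinearIndependent.of_comp
    ((LinearMap.applyₗ (R := ℂ) (Finsupp.single (0, 0, 0) 1 : MonomialSpace)).comp
      (monomialRep hq3).toLinearMap) ?_
  have hinj : Function.Injective
      (fun p : ℕ × Fin 3 × Fin 3 => ((p.1, (p.2.1 : ℕ), (p.2.2 : ℕ)) : ℕ × ℕ × ℕ)) := by
    rintro ⟨k, l, m⟩ ⟨k', l', m'⟩ h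
    simpa [Fin.ext_iff] using h
  convert (Finsupp.linearIndependent_single_one ℂ (ℕ × ℕ × ℕ)).comp _ hinj using 1
  funext p
  exact monomialRep_monomial hq3 p.1 p.2.1.isLt p.2.2.isLt

/-- The family of monomials `x^k y^l θ^m`, `k ∈ ℕ`, `l, m ∈ {0,1,2}`, forms a
basis of `O(ℝ_q(2|1))` as a ℂ-vector space (it is linearly independent and spans). -/
theorem monomials_form_basis (q : ℂ) (hq3 : q ^ 3 = 1) (hq1 : q ≠ 1) :
    LinearIndependent ℂ (fun p : ℕ × Fin 3 × Fin 3 =>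
      (Xg q) ^ p.1 * (Yg q) ^ (p.2.1 : ℕ) * (Tg q) ^ (p.2.2 : ℕ)) ∧
    Submodule.span ℂ (Set.range (fun p : ℕ × Fin 3 × Fin 3 =>
      (Xg q) ^ p.1 * (Yg q) ^ (p.2.1 : ℕ) * (Tg q) ^ (p.2.2 : ℕ))) = ⊤ := by
  exact ⟨linearIndependent_monomials hq3, monomialSpan_eq_top hq3⟩
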